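/- Let κ > 0, σ > 0, r ∈ ℝ, τ > 0 and S₀ > 0, and set a = σ²κτ/S₀. Then the function S ↦ (S/(τσ²))·e^{-rτ}·E[ (A_{σ²τ} − σ²κτ/S)^+ ] is twice differentiable at S₀ and its second derivative at S₀ equals Γ₀ = (σ²κ²τ/S₀³)·e^{-rτ} · g_{τσ²}(a), where g_{τσ²}(a) = (2/a²)·( P[A_{τσ²} ≤ a] − P[A_{τσ²}^{(1)} ≤ a] ) is the density of A_{τσ²} at a. -/

import Mathlib

open MeasureTheory ProbabilityTheory Real Set

noncomputable section

/-- A standard one-dimensional Brownian motion `B` (with `B 0 = 0`, continuous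
paths, Gaussian increments and independent increments) on a probability space
with measure `P`. -/
structure IsBrownianMotion {Ω : Type*} [MeasurableSpace Ω]
    (P : Measure Ω) (B : ℝ → Ω → ℝ) : Prop where
  isProbabilityMeasure : IsProbabilityMeasure P
  measurable : ∀ t : ℝ, Measurable (B t)
  start : ∀ ω, B 0 ω = 0
  continuous_paths : ∀ ω, Continuous fun t => B t ω
  gaussian_increments : ∀ s t : ℝ, 0 ≤ s → s ≤ t →
    P.map (fun ω => B t ω - B s ω) = gaussianReal 0 (Real.toNNReal (t - s))
  indep_increments : ∀ t : ℕ → ℝ, Monotone t → 0 ≤ t 0 →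
    iIndepFun
      (fun (i : ℕ) (ω : Ω) => B (t (i + 1)) ω - B (t i) ω) P

/-- The exponential martingale `M_t = exp (B_t - t/2)`. -/
def M {Ω : Type*} (B : ℝ → Ω → ℝ) (t : ℝ) (ω : Ω) : ℝ :=
  Real.exp (B t ω - t / 2)

/-- The time integral `A_t = ∫_0^t exp (B_s - s/2) ds`. -/
def A {Ω : Type*} (B : ℝ → Ω → ℝ) (t : ℝ) (ω : Ω) : ℝ :=
  ∫ s in (0 : ℝ)..t, Real.exp (B s ω - s / 2)

/-- The time integral with drift `ν`: `A_t^{(ν)} = ∫_0^t exp (B_s + (ν - 1/2) s) ds`. -/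
def Adrift {Ω : Type*} (B : ℝ → Ω → ℝ) (ν t : ℝ) (ω : Ω) : ℝ :=
  ∫ s in (0 : ℝ)..t, Real.exp (B s ω + (ν - 1 / 2) * s)

variable {Ω : Type*} [MeasurableSpace Ω] (P : MeasureTheory.Measure Ω) (B : ℝ → Ω → ℝ)

/-!
Since `M_u` is minus the `u`-derivative of `∫_u^t M`, one has `A_t² / 2 = ∫_0^t M_u (∫_u^t M) du`.
By Girsanov's theorem the weight `M_u` adds a unit drift to `B` up to time `u`, which turns `A_t`
into the interpolation `∫_0^t e^{min(s, u)} M_s ds` between `A_t` (at `u = 0`) and `A_t^{(1)}` (at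
`u = t`). Its derivative in `u` is `e^u ∫_u^t M`, exactly what Girsanov makes of `∫_u^t M`, so
integrating over `u` sweeps out the interval `[A_t, A_t^{(1)}]`:

`E[φ(A_t) A_t² / 2] = ∫ φ(y) P[A_t ≤ y ≤ A_t^{(1)}] dy`.

This identifies the density `g` of `A_t`. Up to a constant factor the call price is `S C(b / S)`
with `C(k) = E[(A_t - k)^+]`. The second derivative of `C` is `g`, so that of `S ↦ S C(b / S)` is
`b² g(b / S) / S³`.
-/

section GaussianShift

lemma lintegral_exp_mul_gaussianReal (m : ℝ) (v : NNReal) {f : ℝ → ENNReal} (hf : Measurable f) :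
    ∫⁻ x, ENNReal.ofReal (exp (x - m - v / 2)) * f x ∂gaussianReal m v
      = ∫⁻ x, f (x + v) ∂gaussianReal m v := by
  obtain rfl | hv := eq_or_ne v 0
  · simp
  have pdf_shift (x : ℝ) :
      gaussianPDF m v x * ENNReal.ofReal (exp (x - m - v / 2)) = gaussianPDF (m + v) v x := by
    rw [gaussianPDF_def, gaussianPDF_def, ← ENNReal.ofReal_mul (gaussianPDFReal_nonneg _ _ _)]
    simp only [gaussianPDFReal]
    rw [mul_assoc, ← exp_add]
    congr 3
    field
  rw [← lintegral_map (μ := gaussianReal m v) hf (by fun_prop),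
    gaussianReal_map_add_const, gaussianReal_of_var_ne_zero _ hv, gaussianReal_of_var_ne_zero _ hv,
    lintegral_withDensity_eq_lintegral_mul _ (measurable_gaussianPDF _ _) (by fun_prop),
    lintegral_withDensity_eq_lintegral_mul _ (measurable_gaussianPDF _ _) hf]
  simp only [Pi.mul_apply, ← mul_assoc, pdf_shift]

variable {E : Type*} [MeasurableSpace E] {P}

lemma lintegral_exp_mul_of_indepFun_gaussianReal [IsProbabilityMeasure P] {W : Ω → E} {Z : Ω → ℝ}
    (hW : Measurable W) (hZ : Measurable Z) (h : IndepFun W Z P) {m : ℝ} {v : NNReal}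
    (hlaw : P.map Z = gaussianReal m v) {F : E × ℝ → ENNReal} (hF : Measurable F) :
    ∫⁻ ω, ENNReal.ofReal (exp (Z ω - m - v / 2)) * F (W ω, Z ω) ∂P
      = ∫⁻ ω, F (W ω, Z ω + v) ∂P := by
  have hmap : P.map (fun ω => (W ω, Z ω)) = (P.map W).prod (gaussianReal m v) := by
    rw [← hlaw, (indepFun_iff_map_prod_eq_prod_map_map hW.aemeasurable hZ.aemeasurable).1 h]
  have disintegrate {G : E × ℝ → ENNReal} (hG : Measurable G) :
      ∫⁻ ω, G (W ω, Z ω) ∂P = ∫⁻ w, ∫⁻ z, G (w, z) ∂gaussianReal m v ∂P.map W := by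
    rw [← lintegral_prod _ hG.aemeasurable, ← hmap, lintegral_map hG (hW.prodMk hZ)]
  rw [disintegrate (G := fun p => ENNReal.ofReal (exp (p.2 - m - v / 2)) * F p) (by fun_prop),
    disintegrate (G := fun p => F (p.1, p.2 + v)) (by fun_prop)]
  exact lintegral_congr fun w =>
    lintegral_exp_mul_gaussianReal m v (f := fun z => F (w, z)) (by fun_prop)

end GaussianShift

section GaussianProcess

variable {T : Type*} {P} {X : T → Ω → ℝ}

lemma covariance_eq_zero_of_variance_eq_zero [IsProbabilityMeasure P] {Y Z : Ω → ℝ}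
    (hZ : MemLp Z 2 P) (h : Var[Z; P] = 0) : cov[Y, Z; P] = 0 := by
  have h_const : Z =ᵐ[P] fun _ => P[Z] := ae_eq_integral_of_variance_eq_zero hZ h
  calc cov[Y, Z; P] = cov[Y, fun _ => P[Z]; P] :=
        integral_congr_ae (by filter_upwards [h_const] with ω hω; simp [hω])
    _ = 0 := covariance_const_right _

lemma indepFun_sub_regression (hX : IsGaussianProcess X P) (u : T) :
    IndepFun (fun ω t => X t ω - cov[X t, X u; P] / Var[X u; P] * X u ω) (X u) P := by
  classical
  have := hX.isProbabilityMeasure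
  have h2 (t : T) : MemLp (X t) 2 P := (hX.hasGaussianLaw_eval t).memLp_two
  set c : T → ℝ := fun t => cov[X t, X u; P] / Var[X u; P]
  have h_gaussian : IsGaussianProcess
      (Sum.elim (fun t ω => X t ω - c t * X u ω) fun (_ : Unit) => X u) P := by
    refine hX.of_isGaussianProcess ?_
    rintro (t | _)
    · exact ⟨{t, u}, .proj ⟨t, by simp⟩ - c t • .proj ⟨u, by simp⟩, by simp⟩
    · exact ⟨{u}, .proj ⟨u, by simp⟩, by simp⟩
  have h_indep := h_gaussian.indepFun_of_covariance_eq_zero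
    (fun t => h_gaussian.aemeasurable (.inl t)) (fun _ => hX.aemeasurable u) fun t _ => by
      rw [covariance_fun_sub_left (h2 t) ((h2 u).const_mul _) (h2 u), covariance_const_mul_left,
        covariance_self (hX.aemeasurable u), sub_eq_zero]
      obtain hv | hv := eq_or_ne Var[X u; P] 0
      · rw [hv, mul_zero, covariance_eq_zero_of_variance_eq_zero (h2 u) hv]
      · exact (div_mul_cancel₀ _ hv).symm
  exact h_indep.comp measurable_id (measurable_pi_apply ())

/-- The Cameron–Martin formula. The residuals of the regression on `X u` are independent of `X u`,
so tilting by `exp (X u)` only shifts the one-dimensional Gaussian `X u`, and the regression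
coefficients turn this shift into the covariances with `X u`. -/
theorem lintegral_exp_mul_of_isGaussianProcess (hX : IsGaussianProcess X P)
    (hX_meas : ∀ t, Measurable (X t)) (u : T) {F : (T → ℝ) → ENNReal} (hF : Measurable F) :
    ∫⁻ ω, ENNReal.ofReal (exp (X u ω - P[X u] - Var[X u; P] / 2)) * F (X · ω) ∂P
      = ∫⁻ ω, F (fun t => X t ω + cov[X t, X u; P]) ∂P := by
  have := hX.isProbabilityMeasure
  have h2 : MemLp (X u) 2 P := (hX.hasGaussianLaw_eval u).memLp_two
  set c : T → ℝ := fun t => cov[X t, X u; P] / Var[X u; P]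
  have h_cov (t : T) : c t * Var[X u; P] = cov[X t, X u; P] :=
    div_mul_cancel_of_imp fun hv => covariance_eq_zero_of_variance_eq_zero h2 hv
  have h_shift := lintegral_exp_mul_of_indepFun_gaussianReal
    (W := fun ω t => X t ω - c t * X u ω)
    (measurable_pi_lambda _ fun t => (hX_meas t).sub ((hX_meas u).const_mul _)) (hX_meas u)
    (indepFun_sub_regression hX u) (hX.hasGaussianLaw_eval u).map_eq_gaussianReal
    (F := fun p => F fun t => p.1 t + c t * p.2) (by fun_prop)
  simp only [Real.coe_toNNReal _ (variance_nonneg _ _), mul_add, h_cov] at h_shift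
  simpa only [← add_assoc, sub_add_cancel] using h_shift

theorem lintegral_exp_mul_of_isGaussianProcess_of_continuous [TopologicalSpace T]
    (hX : IsGaussianProcess X P) (hX_meas : ∀ t, Measurable (X t))
    (hX_cont : ∀ ω, Continuous (X · ω)) {u : T}
    (h_cov : Continuous fun t => cov[X t, X u; P])
    {F : {w : T → ℝ // Continuous w} → ENNReal} (hF : Measurable F) :
    ∫⁻ ω, ENNReal.ofReal (exp (X u ω - P[X u] - Var[X u; P] / 2)) * F ⟨(X · ω), hX_cont ω⟩ ∂P
      = ∫⁻ ω, F ⟨fun t => X t ω + cov[X t, X u; P], (hX_cont ω).add h_cov⟩ ∂P := by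
  -- Continuous paths carry the σ-algebra induced from all paths, so `F` extends to all paths.
  obtain ⟨G, hG, rfl⟩ := hF.exists_eq_measurable_comp
  exact lintegral_exp_mul_of_isGaussianProcess hX hX_meas u hG

end GaussianProcess

section PathIntegrals

lemma measurable_intervalIntegral_of_continuous {f : ℝ → Ω → ℝ}
    (hf_cont : ∀ ω, Continuous (f · ω)) (hf_meas : ∀ s, Measurable (f s)) (a b : ℝ) :
    Measurable fun ω => ∫ s in a..b, f s ω := by
  have hf : StronglyMeasurable fun p : Ω × ℝ => f p.2 p.1 :=
    ((measurable_uncurry_of_continuous_of_measurable hf_cont hf_meas).comp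
      measurable_swap).stronglyMeasurable
  simp only [intervalIntegral]
  exact (hf.integral_prod_right.sub hf.integral_prod_right).measurable

lemma lintegral_Icc_comp_mul_deriv {a b : ℝ} (hab : a ≤ b) {f f' : ℝ → ℝ}
    (hf : ∀ x ∈ Icc a b, HasDerivWithinAt f (f' x) (Icc a b) x) (hf' : ∀ x ∈ Icc a b, 0 ≤ f' x)
    (φ : ℝ → ENNReal) :
    ∫⁻ x in Icc a b, ENNReal.ofReal (f' x) * φ (f x) = ∫⁻ y in Icc (f a) (f b), φ y := by
  have hf_cont : ContinuousOn f (Icc a b) := fun x hx => (hf x hx).continuousWithinAt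
  have hf_mono : MonotoneOn f (Icc a b) :=
    monotoneOn_of_hasDerivWithinAt_nonneg (convex_Icc a b) hf_cont
      (fun x hx => (hf x (interior_subset hx)).mono interior_subset)
      fun x hx => hf' x (interior_subset hx)
  have hf_image : f '' Icc a b = Icc (f a) (f b) :=
    (hf_mono.image_Icc_subset).antisymm (intermediate_value_Icc hab hf_cont)
  rw [← hf_image, lintegral_image_eq_lintegral_deriv_mul_of_monotoneOn measurableSet_Icc hf hf_mono]

variable {m : ℝ → ℝ}

lemma hasDerivAt_integral_left (hm : Continuous m) (t u : ℝ) :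
    HasDerivAt (fun u => ∫ s in u..t, m s) (-m u) u :=
  intervalIntegral.integral_hasDerivAt_left (hm.intervalIntegrable _ _)
    (hm.stronglyMeasurableAtFilter _ _) hm.continuousAt

lemma lintegral_mul_integral_left (hm : Continuous m) (hm0 : ∀ s, 0 ≤ m s) {t : ℝ} (ht : 0 ≤ t) :
    ∫⁻ u in Icc 0 t, ENNReal.ofReal (m u * ∫ s in u..t, m s)
      = ENNReal.ofReal ((∫ s in (0 : ℝ)..t, m s) ^ 2 / 2) := by
  have h_deriv (u : ℝ) :
      HasDerivAt (fun u => -(∫ s in u..t, m s) ^ 2 / 2) (m u * ∫ s in u..t, m s) u :=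
    (((hasDerivAt_integral_left hm t u).pow 2).fun_neg.div_const 2).congr_deriv (by simp; ring)
  have h := lintegral_Icc_comp_mul_deriv ht (fun u _ => (h_deriv u).hasDerivWithinAt)
    (fun u hu => mul_nonneg (hm0 u) (intervalIntegral.integral_nonneg hu.2 fun s _ => hm0 s)) 1
  simpa [neg_div] using h

lemma integral_exp_min_mul (hm : Continuous m) {t u : ℝ} (hu : u ∈ Icc 0 t) :
    ∫ s in (0 : ℝ)..t, exp (min s u) * m s
      = (∫ s in (0 : ℝ)..u, exp s * m s) + exp u * ∫ s in u..t, m s := by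
  have h_cont : Continuous fun s => exp (min s u) * m s := by fun_prop
  rw [← intervalIntegral.integral_add_adjacent_intervals (b := u)
    (h_cont.intervalIntegrable _ _) (h_cont.intervalIntegrable _ _),
    ← intervalIntegral.integral_const_mul]
  congr 1 <;> refine intervalIntegral.integral_congr fun s hs => ?_
  · rw [uIcc_of_le hu.1] at hs
    simp only [min_eq_left hs.2]
  · rw [uIcc_of_le hu.2] at hs
    simp only [min_eq_right hs.1]

lemma hasDerivWithinAt_integral_exp_min_mul (hm : Continuous m) {t u : ℝ} (hu : u ∈ Icc 0 t) :
    HasDerivWithinAt (fun u => ∫ s in (0 : ℝ)..t, exp (min s u) * m s)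
      (exp u * ∫ s in u..t, m s) (Icc 0 t) u := by
  have h_cont : Continuous fun s => exp s * m s := by fun_prop
  have h_deriv := (h_cont.integral_hasStrictDerivAt 0 u).hasDerivAt.add
    ((Real.hasDerivAt_exp u).mul (hasDerivAt_integral_left hm t u))
  refine ((h_deriv.congr_deriv ?_).hasDerivWithinAt).congr
    (fun v hv => integral_exp_min_mul hm hv) (integral_exp_min_mul hm hu)
  ring

lemma lintegral_comp_integral_exp_min_mul (hm : Continuous m) (hm0 : ∀ s, 0 ≤ m s) {t : ℝ}
    (ht : 0 ≤ t) (φ : ℝ → ENNReal) :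
    ∫⁻ u in Icc 0 t, ENNReal.ofReal (exp u * ∫ s in u..t, m s)
        * φ (∫ s in (0 : ℝ)..t, exp (min s u) * m s)
      = ∫⁻ y in Icc (∫ s in (0 : ℝ)..t, m s) (∫ s in (0 : ℝ)..t, exp s * m s), φ y := by
  rw [lintegral_Icc_comp_mul_deriv ht (fun u hu => hasDerivWithinAt_integral_exp_min_mul hm hu)
    (fun u hu => mul_nonneg (exp_nonneg u)
      (intervalIntegral.integral_nonneg hu.2 fun s _ => hm0 s)) φ,
    integral_exp_min_mul hm (left_mem_Icc.2 ht), integral_exp_min_mul hm (right_mem_Icc.2 ht)]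
  simp

end PathIntegrals

section RealDistributions

section RandomVariables

variable {P} {X Y : Ω → ℝ}

lemma measurableSet_snd_mem_Icc (hX : Measurable X) (hY : Measurable Y) :
    MeasurableSet {p : Ω × ℝ | p.2 ∈ Icc (X p.1) (Y p.1)} :=
  (measurableSet_le (hX.comp measurable_fst) measurable_snd).inter
    (measurableSet_le measurable_snd (hY.comp measurable_fst))

lemma measurable_measureReal_mem_Icc [SFinite P] (hX : Measurable X) (hY : Measurable Y) :
    Measurable fun y => P.real {ω | y ∈ Icc (X ω) (Y ω)} :=
  (measurable_measure_prodMk_right (measurableSet_snd_mem_Icc hX hY)).ennreal_toReal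

lemma lintegral_lintegral_Icc [SFinite P] (hX : Measurable X) (hY : Measurable Y)
    {φ : ℝ → ENNReal} (hφ : Measurable φ) :
    ∫⁻ ω, (∫⁻ y in Icc (X ω) (Y ω), φ y) ∂P = ∫⁻ y, φ y * P {ω | y ∈ Icc (X ω) (Y ω)} := by
  set S := {p : Ω × ℝ | p.2 ∈ Icc (X p.1) (Y p.1)}
  have hS : MeasurableSet S := measurableSet_snd_mem_Icc hX hY
  calc ∫⁻ ω, (∫⁻ y in Icc (X ω) (Y ω), φ y) ∂P
      = ∫⁻ ω, (∫⁻ y, S.indicator (fun p => φ p.2) (ω, y)) ∂P :=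
        lintegral_congr fun ω => (lintegral_indicator measurableSet_Icc _).symm
    _ = ∫⁻ y, ∫⁻ ω, S.indicator (fun p => φ p.2) (ω, y) ∂P :=
        lintegral_lintegral_swap (f := fun ω y => S.indicator (fun p => φ p.2) (ω, y))
          ((hφ.comp measurable_snd).indicator hS).aemeasurable
    _ = ∫⁻ y, φ y * P {ω | y ∈ Icc (X ω) (Y ω)} :=
        lintegral_congr fun y => lintegral_indicator_const (measurable_prodMk_right hS) (φ y)

variable [IsProbabilityMeasure P]

lemma cdf_map_eq_real (hX : Measurable X) (y : ℝ) : cdf (P.map X) y = P.real {ω | X ω ≤ y} := by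
  have := Measure.isProbabilityMeasure_map (μ := P) hX.aemeasurable
  rw [cdf_eq_real, map_measureReal_apply hX measurableSet_Iic]
  rfl

lemma measureReal_mem_Icc_eq_cdf_sub_cdf (hX : Measurable X) (hY : Measurable Y)
    (hXY : ∀ ω, X ω ≤ Y ω) {y : ℝ} (hy : P.map Y {y} = 0) :
    P.real {ω | y ∈ Icc (X ω) (Y ω)} = cdf (P.map X) y - cdf (P.map Y) y := by
  rw [Measure.map_apply hY (measurableSet_singleton y)] at hy
  have h_lt : P.real {ω | Y ω < y} = P.real {ω | Y ω ≤ y} := by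
    refine measureReal_congr ?_
    filter_upwards [measure_eq_zero_iff_ae_notMem.1 hy] with ω hω
    exact propext (lt_iff_le_and_ne.trans (and_iff_left hω))
  have h_diff : {ω | y ∈ Icc (X ω) (Y ω)} = {ω | X ω ≤ y} \ {ω | Y ω < y} := by
    ext ω
    simp
  have h_subset : {ω | Y ω < y} ⊆ {ω | X ω ≤ y} := fun ω hω => (hXY ω).trans (mem_ofPred.1 hω).le
  rw [h_diff, measureReal_sdiff h_subset (measurableSet_lt hY measurable_const), h_lt,
    cdf_map_eq_real hX, cdf_map_eq_real hY]

end RandomVariables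

variable {μ : Measure ℝ} [IsProbabilityMeasure μ]

lemma continuousAt_cdf {a : ℝ} (ha : μ {a} = 0) : ContinuousAt (cdf μ) a := by
  rw [(monotone_cdf μ).continuousAt_iff_leftLim_eq_rightLim, StieltjesFunction.rightLim_eq]
  refine ((monotone_cdf μ).leftLim_le le_rfl).antisymm ?_
  rwa [← measure_cdf μ, StieltjesFunction.measure_singleton, ENNReal.ofReal_eq_zero,
    sub_nonpos] at ha

lemma hasDerivAt_cdf_of_withDensity {g : ℝ → ℝ} (hg : Measurable g) (hg0 : ∀ y, 0 ≤ g y)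
    (hμ : μ = volume.withDensity fun y => ENNReal.ofReal (g y)) {a : ℝ} (ha : ContinuousAt g a) :
    HasDerivAt (cdf μ) (g a) a := by
  have hg_int : Integrable g := by
    refine (lintegral_ofReal_ne_top_iff_integrable hg.aestronglyMeasurable (.of_forall hg0)).1 ?_
    rw [← setLIntegral_univ, ← withDensity_apply _ .univ, ← hμ]
    exact measure_ne_top _ _
  have h_cdf (y : ℝ) : cdf μ y = ∫ x in Iic y, g x := by
    rw [cdf_eq_real, measureReal_def, hμ, withDensity_apply _ measurableSet_Iic,
      integral_eq_lintegral_of_nonneg_ae (.of_forall hg0) hg.aestronglyMeasurable]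
  have h_primitive : cdf μ = fun y => (∫ x in a..y, g x) + cdf μ a := by
    ext y
    rw [h_cdf, h_cdf, ← intervalIntegral.integral_Iic_sub_Iic hg_int.integrableOn
      hg_int.integrableOn, sub_add_cancel]
  rw [h_primitive]
  exact (intervalIntegral.integral_hasDerivAt_right hg_int.intervalIntegrable
    hg.stronglyMeasurable.stronglyMeasurableAtFilter ha).add_const _

lemma hasDerivAt_max_sub_zero {y k : ℝ} (h : y ≠ k) :
    HasDerivAt (fun k => max (y - k) 0) ((Iic k).indicator 1 y - 1) k := by
  rcases h.lt_or_gt with h | h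
  · rw [indicator_of_mem (show y ∈ Iic k from h.le)]
    refine ((hasDerivAt_const k (0 : ℝ)).congr_of_eventuallyEq ?_).congr_deriv (by simp)
    filter_upwards [lt_mem_nhds h] with x hx
    exact max_eq_right (sub_nonpos.2 hx.le)
  · rw [indicator_of_notMem (show y ∉ Iic k from not_le.2 h)]
    refine (((hasDerivAt_id k).const_sub y).congr_of_eventuallyEq ?_).congr_deriv (by simp)
    filter_upwards [gt_mem_nhds h] with x hx
    exact max_eq_left (sub_nonneg.2 hx.le)

lemma hasDerivAt_integral_max_sub_zero (hμ : Integrable id μ) {k : ℝ} (hk : μ {k} = 0) :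
    HasDerivAt (fun k => ∫ y, max (y - k) 0 ∂μ) (cdf μ k - 1) k := by
  have h_lipschitz (y : ℝ) : LipschitzWith 1 fun k => max (y - k) 0 :=
    LipschitzWith.max_const (by simpa using (LipschitzWith.const y).sub LipschitzWith.id) 0
  have h_ae : ∀ᵐ y ∂μ, HasDerivAt (fun k => max (y - k) 0) ((Iic k).indicator 1 y - 1) k := by
    filter_upwards [measure_eq_zero_iff_ae_notMem.1 hk] with y hy
    exact hasDerivAt_max_sub_zero hy
  have h := hasDerivAt_integral_of_dominated_loc_of_lip
    (F := fun k y => max (y - k) 0) (bound := fun _ => 1) Filter.univ_mem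
    (.of_forall fun k => by fun_prop) ((hμ.sub (integrable_const k)).sup (integrable_const 0))
    ((measurable_one.indicator measurableSet_Iic).sub_const 1).aestronglyMeasurable
    (.of_forall fun y => by simpa using h_lipschitz y) (integrable_const _) h_ae
  refine h.2.congr_deriv ?_
  rw [integral_sub ((integrable_const 1).indicator measurableSet_Iic) (integrable_const _),
    integral_indicator_one measurableSet_Iic, cdf_eq_real]
  simp

end RealDistributions

/-- The time integral of `M` along the paths of `B` with an extra unit drift up to time `u`. It
interpolates between `A_t` (at `u = 0`) and `A_t^{(1)}` (at `u = t`). -/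
def AdriftUntil {Ω : Type*} (B : ℝ → Ω → ℝ) (u t : ℝ) (ω : Ω) : ℝ :=
  ∫ s in (0 : ℝ)..t, exp (min s u) * M B s ω

lemma Adrift_one_eq {Ω : Type*} (B : ℝ → Ω → ℝ) (t : ℝ) (ω : Ω) :
    Adrift B 1 t ω = ∫ s in (0 : ℝ)..t, exp s * M B s ω := by
  simp only [Adrift, M, ← exp_add]
  congr! 3
  ring

section Brownian

variable {P B}

namespace IsBrownianMotion

lemma isPreBrownianReal (hB : IsBrownianMotion P B) :
    IsPreBrownianReal (fun (t : NNReal) => B t) P := by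
  refine HasIndepIncrements.isPreBrownianReal_of_hasLaw (fun t => ⟨?_, ?_⟩)
    (.of_nat fun t ht _ => ?_)
  · exact (hB.measurable t).aemeasurable
  · simpa [hB.start] using hB.gaussian_increments 0 t le_rfl t.2
  · exact hB.indep_increments (fun i => t i) (fun i j hij => ht hij) (t 0).2

/-- Girsanov's theorem for a unit drift that is switched off at time `u`. -/
theorem lintegral_M_mul_path (hB : IsBrownianMotion P B) (u : NNReal)
    {F : {w : NNReal → ℝ // Continuous w} → ENNReal} (hF : Measurable F) :
    ∫⁻ ω, ENNReal.ofReal (M B u ω) *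
        F ⟨fun s => B s ω, (hB.continuous_paths ω).comp NNReal.continuous_coe⟩ ∂P
      = ∫⁻ ω, F ⟨fun s => B s ω + min (s : ℝ) u, by
          have := hB.continuous_paths ω; fun_prop⟩ ∂P := by
  have hX := hB.isPreBrownianReal
  have h := lintegral_exp_mul_of_isGaussianProcess_of_continuous hX.isGaussianProcess
    (fun t => hB.measurable t) (fun ω => (hB.continuous_paths ω).comp NNReal.continuous_coe)
    (u := u) (by simp only [hX.covariance_eval]; fun_prop) hF
  simpa only [M, hX.covariance_eval, hX.integral_eval,
    ← covariance_self (hX.aemeasurable u), min_self, sub_zero, NNReal.coe_min] using h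

lemma continuous_M (hB : IsBrownianMotion P B) (ω : Ω) : Continuous (M B · ω) := by
  have := hB.continuous_paths ω
  unfold M
  fun_prop

lemma measurable_M (hB : IsBrownianMotion P B) (t : ℝ) : Measurable (M B t) :=
  ((hB.measurable t).sub_const _).exp

lemma measurable_integral_M (hB : IsBrownianMotion P B) (a b : ℝ) :
    Measurable fun ω => ∫ s in a..b, M B s ω :=
  measurable_intervalIntegral_of_continuous hB.continuous_M hB.measurable_M a b

lemma measurable_A (hB : IsBrownianMotion P B) (t : ℝ) : Measurable (A B t) :=
  hB.measurable_integral_M 0 t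

lemma measurable_AdriftUntil (hB : IsBrownianMotion P B) (u t : ℝ) :
    Measurable (AdriftUntil B u t) :=
  measurable_intervalIntegral_of_continuous
    (fun ω => by have := hB.continuous_M ω; fun_prop)
    (fun s => (hB.measurable_M s).const_mul _) 0 t

theorem lintegral_M_mul_comp_A_integral_M (hB : IsBrownianMotion P B) {u t : ℝ} (hu : 0 ≤ u)
    (hut : u ≤ t) {G : ℝ × ℝ → ENNReal} (hG : Measurable G) :
    ∫⁻ ω, ENNReal.ofReal (M B u ω) * G (A B t ω, ∫ s in u..t, M B s ω) ∂P
      = ∫⁻ ω, G (AdriftUntil B u t ω, exp u * ∫ s in u..t, M B s ω) ∂P := by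
  lift u to NNReal using hu
  let I (a b : ℝ) (w : {w : NNReal → ℝ // Continuous w}) : ℝ :=
    ∫ s in a..b, exp (w.1 s.toNNReal - s / 2)
  have hI (a b : ℝ) : Measurable (I a b) :=
    measurable_intervalIntegral_of_continuous (fun w => by have := w.2; fun_prop)
      (fun s => (((measurable_pi_apply _).comp measurable_subtype_coe).sub_const _).exp) a b
  have hI_eq {a : ℝ} (ha : 0 ≤ a) (hat : a ≤ t) {w : ℝ → ℝ} (hw : Continuous w) :
      I a t ⟨fun s => w s, hw.comp NNReal.continuous_coe⟩ = ∫ s in a..t, exp (w s - s / 2) := by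
    refine intervalIntegral.integral_congr fun s hs => ?_
    rw [uIcc_of_le hat] at hs
    simp only [Real.coe_toNNReal s (ha.trans hs.1)]
  have exp_shift (s : ℝ) (ω : Ω) : exp (B s ω + min s u - s / 2) = exp (min s u) * M B s ω := by
    rw [M, ← exp_add]
    ring_nf
  have exp_shift_const (ω : Ω) :
      ∫ s in (u : ℝ)..t, exp (min s u) * M B s ω = exp u * ∫ s in (u : ℝ)..t, M B s ω := by
    rw [← intervalIntegral.integral_const_mul]
    refine intervalIntegral.integral_congr fun s hs => ?_
    rw [uIcc_of_le hut] at hs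
    simp only [min_eq_right hs.1]
  have h := hB.lintegral_M_mul_path u
    (F := fun w => G (I 0 t w, I u t w)) (hG.comp ((hI 0 t).prodMk (hI u t)))
  have ht : 0 ≤ t := u.2.trans hut
  have hB_shift (ω : Ω) : Continuous fun s => B s ω + min s u :=
    (hB.continuous_paths ω).add (by fun_prop)
  simp only [hI_eq le_rfl ht (hB.continuous_paths _),
    hI_eq u.coe_nonneg hut (hB.continuous_paths _), hI_eq le_rfl ht (hB_shift _),
    hI_eq u.coe_nonneg hut (hB_shift _), exp_shift, exp_shift_const] at h
  exact h

lemma measurable_uncurry_integral_M (hB : IsBrownianMotion P B) (t : ℝ) :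
    Measurable fun p : ℝ × Ω => ∫ s in p.1..t, M B s p.2 :=
  measurable_uncurry_of_continuous_of_measurable (u := fun u ω => ∫ s in u..t, M B s ω)
    (fun ω => continuous_iff_continuousAt.2 fun u =>
      (hasDerivAt_integral_left (hB.continuous_M ω) t u).continuousAt)
    fun u => hB.measurable_integral_M u t

lemma measurable_uncurry_M (hB : IsBrownianMotion P B) :
    Measurable fun p : ℝ × Ω => M B p.1 p.2 :=
  measurable_uncurry_of_continuous_of_measurable hB.continuous_M hB.measurable_M

lemma measurable_uncurry_AdriftUntil (hB : IsBrownianMotion P B) (t : ℝ) :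
    Measurable fun p : ℝ × Ω => AdriftUntil B p.1 t p.2 :=
  measurable_uncurry_of_continuous_of_measurable (u := fun u ω => AdriftUntil B u t ω)
    (fun ω => by
      have := hB.continuous_M ω
      exact intervalIntegral.continuous_parametric_intervalIntegral_of_continuous'
        (by fun_prop) 0 t)
    fun u => hB.measurable_AdriftUntil u t

lemma measurable_Adrift_one (hB : IsBrownianMotion P B) (t : ℝ) : Measurable (Adrift B 1 t) := by
  simp only [funext (Adrift_one_eq B t)]
  exact measurable_intervalIntegral_of_continuous
    (fun ω => by have := hB.continuous_M ω; fun_prop) (fun s => (hB.measurable_M s).const_mul _) 0 t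

lemma A_le_Adrift_one (hB : IsBrownianMotion P B) {t : ℝ} (ht : 0 ≤ t) (ω : Ω) :
    A B t ω ≤ Adrift B 1 t ω := by
  have h_cont := hB.continuous_M ω
  rw [Adrift_one_eq]
  exact intervalIntegral.integral_mono_on ht (h_cont.intervalIntegrable _ _)
    ((continuous_exp.mul h_cont).intervalIntegrable _ _)
    fun s hs => le_mul_of_one_le_left (exp_nonneg _) (one_le_exp hs.1)

lemma A_pos (hB : IsBrownianMotion P B) {t : ℝ} (ht : 0 < t) (ω : Ω) : 0 < A B t ω :=
  intervalIntegral.intervalIntegral_pos_of_pos ((hB.continuous_M ω).intervalIntegrable _ _)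
    (fun _ => exp_pos _) ht

lemma lintegral_comp_A_mul_M (hB : IsBrownianMotion P B) {u t : ℝ} (hu : u ∈ Icc 0 t)
    {φ : ℝ → ENNReal} (hφ : Measurable φ) :
    ∫⁻ ω, φ (A B t ω) * ENNReal.ofReal (M B u ω * ∫ s in u..t, M B s ω) ∂P
      = ∫⁻ ω, ENNReal.ofReal (exp u * ∫ s in u..t, M B s ω) * φ (AdriftUntil B u t ω) ∂P := by
  rw [← hB.lintegral_M_mul_comp_A_integral_M hu.1 hu.2
    (G := fun p => ENNReal.ofReal p.2 * φ p.1) (by fun_prop)]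
  refine lintegral_congr fun ω => ?_
  have hM : 0 ≤ M B u ω := exp_nonneg _
  rw [ENNReal.ofReal_mul hM]
  ring

theorem lintegral_comp_A_mul_sq (hB : IsBrownianMotion P B) {t : ℝ} (ht : 0 ≤ t)
    {φ : ℝ → ENNReal} (hφ : Measurable φ) :
    ∫⁻ ω, φ (A B t ω) * ENNReal.ofReal (A B t ω ^ 2 / 2) ∂P
      = ∫⁻ y, φ y * P {ω | y ∈ Icc (A B t ω) (Adrift B 1 t ω)} := by
  have := hB.isProbabilityMeasure
  have hA := hB.measurable_A t
  have hI := hB.measurable_uncurry_integral_M t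
  have h_prod_meas : Measurable fun p : ℝ × Ω =>
      ENNReal.ofReal (M B p.1 p.2 * ∫ s in p.1..t, M B s p.2) :=
    (hB.measurable_uncurry_M.mul hI).ennreal_ofReal
  have h_sweep_meas : Measurable fun p : ℝ × Ω =>
      ENNReal.ofReal (exp p.1 * ∫ s in p.1..t, M B s p.2) * φ (AdriftUntil B p.1 t p.2) :=
    (measurable_fst.exp.mul hI).ennreal_ofReal.mul (hφ.comp (hB.measurable_uncurry_AdriftUntil t))
  have square (ω : Ω) : φ (A B t ω) * ENNReal.ofReal (A B t ω ^ 2 / 2)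
      = ∫⁻ u in Icc 0 t, φ (A B t ω) * ENNReal.ofReal (M B u ω * ∫ s in u..t, M B s ω) := by
    rw [lintegral_const_mul _ (h_prod_meas.of_uncurry_right (f := fun u ω =>
        ENNReal.ofReal (M B u ω * ∫ s in u..t, M B s ω))),
      lintegral_mul_integral_left (hB.continuous_M ω) (fun _ => exp_nonneg _) ht]
    rfl
  have sweep (ω : Ω) :
      ∫⁻ u in Icc 0 t, ENNReal.ofReal (exp u * ∫ s in u..t, M B s ω) * φ (AdriftUntil B u t ω)
        = ∫⁻ y in Icc (A B t ω) (Adrift B 1 t ω), φ y := by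
    rw [Adrift_one_eq]
    exact lintegral_comp_integral_exp_min_mul (hB.continuous_M ω) (fun _ => exp_nonneg _) ht φ
  calc ∫⁻ ω, φ (A B t ω) * ENNReal.ofReal (A B t ω ^ 2 / 2) ∂P
      = ∫⁻ u in Icc 0 t,
          ∫⁻ ω, φ (A B t ω) * ENNReal.ofReal (M B u ω * ∫ s in u..t, M B s ω) ∂P := by
        rw [lintegral_congr square, lintegral_lintegral_swap]
        exact ((hφ.comp (hA.comp measurable_fst)).mul
          (h_prod_meas.comp measurable_swap)).aemeasurable
    _ = ∫⁻ u in Icc 0 t,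
          ∫⁻ ω, ENNReal.ofReal (exp u * ∫ s in u..t, M B s ω) * φ (AdriftUntil B u t ω) ∂P :=
        setLIntegral_congr_fun measurableSet_Icc fun u hu => hB.lintegral_comp_A_mul_M hu hφ
    _ = ∫⁻ ω, (∫⁻ y in Icc (A B t ω) (Adrift B 1 t ω), φ y) ∂P := by
        rw [lintegral_lintegral_swap h_sweep_meas.aemeasurable, lintegral_congr sweep]
    _ = ∫⁻ y, φ y * P {ω | y ∈ Icc (A B t ω) (Adrift B 1 t ω)} :=
        lintegral_lintegral_Icc hA (hB.measurable_Adrift_one t) hφ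

lemma map_A_eq_withDensity (hB : IsBrownianMotion P B) {t : ℝ} (ht : 0 < t) :
    P.map (A B t) = volume.withDensity fun y =>
      ENNReal.ofReal (2 / y ^ 2 * P.real {ω | y ∈ Icc (A B t ω) (Adrift B 1 t ω)}) := by
  have := hB.isProbabilityMeasure
  have hA := hB.measurable_A t
  refine Measure.ext_of_lintegral _ fun f hf => ?_
  have h_cancel (ω : Ω) : f (A B t ω) = f (A B t ω) * ENNReal.ofReal (2 / A B t ω ^ 2) *
      ENNReal.ofReal (A B t ω ^ 2 / 2) := by
    have h_pos := hB.A_pos ht ω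
    rw [mul_assoc, ← ENNReal.ofReal_mul (by positivity), div_mul_div_cancel₀ (by positivity),
      div_self two_ne_zero, ENNReal.ofReal_one, mul_one]
  calc ∫⁻ y, f y ∂P.map (A B t) = ∫⁻ ω, f (A B t ω) ∂P := lintegral_map hf hA
    _ = ∫⁻ y, f y * ENNReal.ofReal (2 / y ^ 2) * P {ω | y ∈ Icc (A B t ω) (Adrift B 1 t ω)} := by
      rw [lintegral_congr h_cancel, hB.lintegral_comp_A_mul_sq ht.le
        (φ := fun y => f y * ENNReal.ofReal (2 / y ^ 2)) (by fun_prop)]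
    _ = _ := by
      rw [lintegral_withDensity_eq_lintegral_mul _ _ hf]
      · refine lintegral_congr fun y => ?_
        rw [Pi.mul_apply, ENNReal.ofReal_mul (by positivity), ofReal_measureReal]
        ring
      · exact (by fun_prop : Measurable fun y : ℝ => 2 / y ^ 2).mul
          (measurable_measureReal_mem_Icc hA (hB.measurable_Adrift_one t)) |>.ennreal_ofReal

lemma map_A_singleton (hB : IsBrownianMotion P B) {t : ℝ} (ht : 0 < t) (a : ℝ) :
    P.map (A B t) {a} = 0 := by
  rw [hB.map_A_eq_withDensity ht]
  exact withDensity_absolutelyContinuous _ _ (measure_singleton a)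

lemma map_Adrift_one_absolutelyContinuous (hB : IsBrownianMotion P B) {t : ℝ} (ht : 0 ≤ t) :
    P.map (Adrift B 1 t) ≪ P.map (A B t) := by
  refine Measure.AbsolutelyContinuous.mk fun s hs h0 => ?_
  have h_eq (ω : Ω) : AdriftUntil B t t ω = Adrift B 1 t ω := by
    rw [AdriftUntil, integral_exp_min_mul (hB.continuous_M ω) (right_mem_Icc.2 ht), Adrift_one_eq]
    simp
  have h_girsanov := hB.lintegral_M_mul_comp_A_integral_M ht le_rfl
    (G := fun p => s.indicator 1 p.1) ((measurable_one.indicator hs).comp measurable_fst)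
  simp only [h_eq] at h_girsanov
  rw [Measure.map_apply (hB.measurable_A t) hs] at h0
  rw [Measure.map_apply (hB.measurable_Adrift_one t) hs,
    ← lintegral_indicator_one (hB.measurable_Adrift_one t hs)]
  refine h_girsanov.symm.trans ((lintegral_congr_ae ?_).trans lintegral_zero)
  filter_upwards [measure_eq_zero_iff_ae_notMem.1 h0] with ω hω
  rw [indicator_of_notMem (mt mem_preimage.2 hω), mul_zero]

lemma map_Adrift_one_singleton (hB : IsBrownianMotion P B) {t : ℝ} (ht : 0 < t) (a : ℝ) :
    P.map (Adrift B 1 t) {a} = 0 :=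
  hB.map_Adrift_one_absolutelyContinuous ht.le (hB.map_A_singleton ht a)

theorem hasDerivAt_cdf_map_A (hB : IsBrownianMotion P B) {t : ℝ} (ht : 0 < t) {a : ℝ}
    (ha : a ≠ 0) :
    HasDerivAt (cdf (P.map (A B t)))
      (2 / a ^ 2 * (cdf (P.map (A B t)) a - cdf (P.map (Adrift B 1 t)) a)) a := by
  have := hB.isProbabilityMeasure
  have := Measure.isProbabilityMeasure_map (μ := P) (hB.measurable_A t).aemeasurable
  have := Measure.isProbabilityMeasure_map (μ := P) (hB.measurable_Adrift_one t).aemeasurable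
  have h_prob (y : ℝ) : P.real {ω | y ∈ Icc (A B t ω) (Adrift B 1 t ω)}
      = cdf (P.map (A B t)) y - cdf (P.map (Adrift B 1 t)) y :=
    measureReal_mem_Icc_eq_cdf_sub_cdf (hB.measurable_A t) (hB.measurable_Adrift_one t)
      (hB.A_le_Adrift_one ht.le) (hB.map_Adrift_one_singleton ht y)
  have h_density := hB.map_A_eq_withDensity ht
  simp only [h_prob] at h_density
  refine hasDerivAt_cdf_of_withDensity (g := fun y => 2 / y ^ 2 *
      (cdf (P.map (A B t)) y - cdf (P.map (Adrift B 1 t)) y)) ?_ (fun y => ?_) h_density ?_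
  · exact (by fun_prop : Measurable fun y : ℝ => 2 / y ^ 2).mul
      ((monotone_cdf _).measurable.sub (monotone_cdf _).measurable)
  · rw [← h_prob]
    positivity
  · exact (continuousAt_const.div (continuousAt_id.pow 2) (pow_ne_zero 2 ha)).mul
      ((continuousAt_cdf (hB.map_A_singleton ht a)).sub
        (continuousAt_cdf (hB.map_Adrift_one_singleton ht a)))

lemma lintegral_M (hB : IsBrownianMotion P B) {u : ℝ} (hu : 0 ≤ u) :
    ∫⁻ ω, ENNReal.ofReal (M B u ω) ∂P = 1 := by
  have := hB.isProbabilityMeasure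
  lift u to NNReal using hu
  simpa using hB.lintegral_M_mul_path u (F := fun _ => 1) measurable_const

lemma integrable_A (hB : IsBrownianMotion P B) {t : ℝ} (ht : 0 ≤ t) : Integrable (A B t) P := by
  have := hB.isProbabilityMeasure
  have h_ofReal (ω : Ω) :
      ENNReal.ofReal (A B t ω) = ∫⁻ u in Ioc 0 t, ENNReal.ofReal (M B u ω) := by
    rw [A, intervalIntegral.integral_of_le ht]
    exact ofReal_integral_eq_lintegral_ofReal
      ((hB.continuous_M ω).integrableOn_Ioc) (.of_forall fun _ => exp_nonneg _)
  refine (lintegral_ofReal_ne_top_iff_integrable (hB.measurable_A t).aestronglyMeasurable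
    (.of_forall fun ω => intervalIntegral.integral_nonneg ht fun _ _ => exp_nonneg _)).1 ?_
  rw [lintegral_congr h_ofReal, lintegral_lintegral_swap
    (hB.measurable_uncurry_M.comp measurable_swap).ennreal_ofReal.aemeasurable,
    setLIntegral_congr_fun measurableSet_Ioc fun u hu => hB.lintegral_M hu.1.le]
  simp

theorem hasDerivAt_integral_max_A_sub_zero (hB : IsBrownianMotion P B) {t : ℝ} (ht : 0 < t)
    (k : ℝ) :
    HasDerivAt (fun k => ∫ ω, max (A B t ω - k) 0 ∂P) (cdf (P.map (A B t)) k - 1) k := by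
  have := hB.isProbabilityMeasure
  have hA := (hB.measurable_A t).aemeasurable (μ := P)
  have := Measure.isProbabilityMeasure_map hA
  have h_id : Integrable id (P.map (A B t)) :=
    (integrable_map_measure (by fun_prop) hA).2 (hB.integrable_A ht.le)
  have h_deriv := hasDerivAt_integral_max_sub_zero h_id (hB.map_A_singleton ht k)
  have h_map (k : ℝ) :
      ∫ y, max (y - k) 0 ∂P.map (A B t) = ∫ ω, max (A B t ω - k) 0 ∂P :=
    integral_map hA (by fun_prop)
  simpa only [h_map] using h_deriv

end IsBrownianMotion

end Brownian

section Perspective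

variable {C F : ℝ → ℝ} {b S : ℝ}

lemma hasDerivAt_const_div (b : ℝ) (hS : S ≠ 0) :
    HasDerivAt (fun S => b / S) (-(b / S ^ 2)) S :=
  ((hasDerivAt_const S b).div (hasDerivAt_id S) hS).congr_deriv (by simp [neg_div])

lemma hasDerivAt_mul_comp_const_div (hS : S ≠ 0) (hC : HasDerivAt C (F (b / S)) (b / S)) :
    HasDerivAt (fun S => S * C (b / S)) (C (b / S) - b / S * F (b / S)) S := by
  refine ((hasDerivAt_id S).mul (hC.comp S (hasDerivAt_const_div b hS))).congr_deriv ?_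
  simp only [Function.comp_apply, id]
  field

lemma hasDerivAt_deriv_mul_comp_const_div (hS : S ≠ 0) (hC : ∀ k, HasDerivAt C (F k) k) {g : ℝ}
    (hF : HasDerivAt F g (b / S)) :
    HasDerivAt (deriv fun S => S * C (b / S)) (b ^ 2 / S ^ 3 * g) S := by
  have h_deriv : (deriv fun S => S * C (b / S)) =ᶠ[nhds S] fun S => C (b / S) - b / S * F (b / S) :=
    (eventually_ne_nhds hS).mono fun S hS => (hasDerivAt_mul_comp_const_div hS (hC _)).deriv
  have h_div := hasDerivAt_const_div b hS
  refine ((((hC _).comp S h_div).sub (h_div.mul (hF.comp S h_div))).congr_of_eventuallyEq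
    h_deriv).congr_deriv ?_
  simp only [Function.comp_apply]
  field

end Perspective

theorem asian_call_gamma (hB : IsBrownianMotion P B)
    (κ σ r τ S₀ : ℝ) (hκ : 0 < κ) (hσ : 0 < σ) (hτ : 0 < τ) (hS : 0 < S₀) :
    DifferentiableAt ℝ
      (fun S => S / (τ * σ ^ 2) * Real.exp (-r * τ) *
        ∫ ω, max (A B (σ ^ 2 * τ) ω - σ ^ 2 * κ * τ / S) 0 ∂P) S₀ ∧
    HasDerivAt
      (deriv (fun S => S / (τ * σ ^ 2) * Real.exp (-r * τ) *
        ∫ ω, max (A B (σ ^ 2 * τ) ω - σ ^ 2 * κ * τ / S) 0 ∂P))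
      (σ ^ 2 * κ ^ 2 * τ / S₀ ^ 3 * Real.exp (-r * τ) *
        (2 / (σ ^ 2 * κ * τ / S₀) ^ 2 *
          ((P {ω | A B (τ * σ ^ 2) ω ≤ σ ^ 2 * κ * τ / S₀}).toReal
            - (P {ω | Adrift B 1 (τ * σ ^ 2) ω ≤ σ ^ 2 * κ * τ / S₀}).toReal))) S₀ := by
  have := hB.isProbabilityMeasure
  set b := σ ^ 2 * κ * τ with hb
  set t := τ * σ ^ 2 with ht_def
  set C := fun k => ∫ ω, max (A B t ω - k) 0 ∂P
  set F := fun k => cdf (P.map (A B t)) k - 1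
  have ht : 0 < t := by positivity
  have h_price : (fun S => S / t * exp (-r * τ) * ∫ ω, max (A B (σ ^ 2 * τ) ω - b / S) 0 ∂P)
      = fun S => exp (-r * τ) / t * (S * C (b / S)) := by
    ext S
    rw [mul_comm (σ ^ 2) τ]
    ring
  have hC (k : ℝ) : HasDerivAt C (F k) k := hB.hasDerivAt_integral_max_A_sub_zero ht k
  have hF := (hB.hasDerivAt_cdf_map_A ht (a := b / S₀) (by positivity)).sub_const 1
  rw [cdf_map_eq_real (hB.measurable_A t), cdf_map_eq_real (hB.measurable_Adrift_one t)] at hF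
  rw [h_price]
  refine ⟨(hasDerivAt_mul_comp_const_div hS.ne' (hC _)).differentiableAt.const_mul _, ?_⟩
  rw [deriv_const_mul_field']
  refine ((hasDerivAt_deriv_mul_comp_const_div hS.ne' hC hF).const_mul _).congr_deriv ?_
  simp only [hb, ht_def, measureReal_def]
  field
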